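/- arXiv:1705.02191 — 2 statements merged into one kernel-verified Lean document; each statement's English description precedes it below -/
import Mathlib

section
/- Let n = 1, v̄ > 0, V = [−v̄, v̄], and let M : V → ℝ be measurable with M(v) ≥ δ for all v ∈ V, for some δ > 0. Then for every p ∈ ℝ with p ≠ 0 one has ∫_V M(v)/(μ(p) − v p) dv = +∞, where μ(p) = |p| v̄. In particular the singular set Sing(M) is empty, and for every p ∈ ℝ there exists a unique H(p) > μ(p) − 1 with ∫_V M(v)/(1 + H(p) − v p) dv = 1. -/
open MeasureTheory

open Filter Topology

section DispersionIntegral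

variable {vbar p δ : ℝ} {M : ℝ → ℝ}

theorem mul_le_abs_mul_of_mem_Icc {v : ℝ} (hv : v ∈ Set.Icc (-vbar) vbar) :
    v * p ≤ |p| * vbar :=
  calc v * p ≤ |v * p| := le_abs_self _
    _ = |p| * |v| := by rw [abs_mul, mul_comm]
    _ ≤ |p| * vbar := mul_le_mul_of_nonneg_left (abs_le.2 hv) (abs_nonneg p)

/-- The kernel `1 / (μ(p) - v p)` has a non-integrable singularity at an endpoint of `V`. -/
theorem not_integrableOn_inv_abs_mul_sub (hvbar : 0 < vbar) (hp : p ≠ 0) :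
    ¬ IntegrableOn (fun v ↦ (|p| * vbar - v * p)⁻¹) (Set.Icc (-vbar) vbar) := by
  intro h
  have hle : -vbar ≤ vbar := by linarith
  have hkernel : (fun v ↦ (v - |p| * vbar / p)⁻¹) =
      fun v ↦ -p * (|p| * vbar - v * p)⁻¹ := by
    funext v
    have hv : v - |p| * vbar / p = (|p| * vbar - v * p) * (-p)⁻¹ := by
      field_simp
      ring
    rw [hv, mul_inv, inv_inv, mul_comm]
  have hint : IntervalIntegrable (fun v ↦ (v - |p| * vbar / p)⁻¹) volume (-vbar) vbar := by
    rw [intervalIntegrable_iff_integrableOn_Icc_of_le hle, hkernel]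
    exact h.const_mul (-p)
  rw [intervalIntegrable_sub_inv_iff, Set.uIcc_of_le hle] at hint
  rcases hint with hint | hint
  · linarith
  · refine hint ?_
    rcases abs_cases p with ⟨hp', -⟩ | ⟨hp', -⟩ <;> rw [hp']
    · rw [mul_div_cancel_left₀ _ hp]
      exact ⟨hle, le_rfl⟩
    · rw [neg_mul, neg_div, mul_div_cancel_left₀ _ hp]
      exact ⟨le_rfl, hle⟩

theorem lintegral_div_abs_mul_sub_eq_top (hvbar : 0 < vbar) (hM : Measurable M) (hδ : 0 < δ)
    (hMδ : ∀ v ∈ Set.Icc (-vbar) vbar, δ ≤ M v) (hp : p ≠ 0) :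
    ∫⁻ v in Set.Icc (-vbar) vbar, ENNReal.ofReal (M v / (|p| * vbar - v * p)) = ⊤ := by
  by_contra hfin
  have hnonneg : 0 ≤ᵐ[volume.restrict (Set.Icc (-vbar) vbar)]
      fun v ↦ M v / (|p| * vbar - v * p) := by
    filter_upwards [ae_restrict_mem measurableSet_Icc] with v hv
    exact div_nonneg (hδ.le.trans (hMδ v hv)) (sub_nonneg.2 (mul_le_abs_mul_of_mem_Icc hv))
  have hmeas : Measurable fun v ↦ M v / (|p| * vbar - v * p) := by fun_prop
  have hint : IntegrableOn (fun v ↦ M v / (|p| * vbar - v * p)) (Set.Icc (-vbar) vbar) :=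
    (lintegral_ofReal_ne_top_iff_integrable hmeas.aestronglyMeasurable hnonneg).1 hfin
  refine not_integrableOn_inv_abs_mul_sub hvbar hp ((hint.const_mul δ⁻¹).mono' ?_ ?_)
  · exact Measurable.aestronglyMeasurable (by fun_prop)
  · filter_upwards [ae_restrict_mem measurableSet_Icc] with v hv
    have hinv : 0 ≤ (|p| * vbar - v * p)⁻¹ :=
      inv_nonneg.2 (sub_nonneg.2 (mul_le_abs_mul_of_mem_Icc hv))
    rw [Real.norm_of_nonneg hinv, div_eq_mul_inv, ← mul_assoc]
    refine le_mul_of_one_le_left hinv ?_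
    rw [inv_mul_eq_div]
    exact (one_le_div hδ).2 (hMδ v hv)

theorem integrableOn_div_sub_mul (hM : IntegrableOn M (Set.Icc (-vbar) vbar)) {c : ℝ}
    (hc : |p| * vbar < c) :
    IntegrableOn (fun v ↦ M v / (c - v * p)) (Set.Icc (-vbar) vbar) := by
  have hpos : ∀ v ∈ Set.Icc (-vbar) vbar, c - v * p ≠ 0 := fun v hv ↦
    (sub_pos.2 ((mul_le_abs_mul_of_mem_Icc hv).trans_lt hc)).ne'
  simp_rw [div_eq_mul_inv]
  exact hM.mul_continuousOn (ContinuousOn.inv₀ (by fun_prop) hpos) isCompact_Icc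

theorem setIntegral_Icc_pos (hvbar : 0 < vbar) (hM : IntegrableOn M (Set.Icc (-vbar) vbar))
    (hMpos : ∀ v ∈ Set.Icc (-vbar) vbar, 0 < M v) :
    0 < ∫ v in Set.Icc (-vbar) vbar, M v := by
  refine (setIntegral_pos_iff_support_of_nonneg_ae ?_ hM).2 ?_
  · filter_upwards [ae_restrict_mem measurableSet_Icc] with v hv
    exact (hMpos v hv).le
  · rw [Set.inter_eq_right.2 fun v hv ↦ Function.mem_support.2 (hMpos v hv).ne',
      Real.volume_Icc]
    exact ENNReal.ofReal_pos.2 (by linarith)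

theorem integral_div_sub_mul_lt (hvbar : 0 < vbar) (hM : IntegrableOn M (Set.Icc (-vbar) vbar))
    (hMpos : ∀ v ∈ Set.Icc (-vbar) vbar, 0 < M v) {c d : ℝ} (hc : |p| * vbar < c)
    (hcd : c < d) :
    ∫ v in Set.Icc (-vbar) vbar, M v / (d - v * p) <
      ∫ v in Set.Icc (-vbar) vbar, M v / (c - v * p) := by
  have hic := integrableOn_div_sub_mul hM hc
  have hid := integrableOn_div_sub_mul hM (hc.trans hcd)
  have hlt : ∀ v ∈ Set.Icc (-vbar) vbar, M v / (d - v * p) < M v / (c - v * p) := fun v hv ↦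
    div_lt_div_of_pos_left (hMpos v hv)
      (sub_pos.2 ((mul_le_abs_mul_of_mem_Icc hv).trans_lt hc)) (by linarith)
  rw [← sub_pos, ← integral_sub hic hid]
  exact setIntegral_Icc_pos hvbar (hic.sub hid) fun v hv ↦ sub_pos.2 (hlt v hv)

theorem continuousOn_integral_div_sub_mul (hM : IntegrableOn M (Set.Icc (-vbar) vbar))
    (hMpos : ∀ v ∈ Set.Icc (-vbar) vbar, 0 < M v) {c : ℝ} (hc : |p| * vbar < c) :
    ContinuousOn (fun d ↦ ∫ v in Set.Icc (-vbar) vbar, M v / (d - v * p)) (Set.Ici c) := by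
  refine continuousOn_of_dominated (bound := fun v ↦ M v / (c - v * p))
    (fun d hd ↦ (integrableOn_div_sub_mul hM (hc.trans_le hd)).aestronglyMeasurable)
    (fun d hd ↦ ?_) (integrableOn_div_sub_mul hM hc) ?_
  · filter_upwards [ae_restrict_mem measurableSet_Icc] with v hv
    have hv' := sub_pos.2 ((mul_le_abs_mul_of_mem_Icc (p := p) hv).trans_lt hc)
    have hcd : c - v * p ≤ d - v * p := sub_le_sub_right hd _
    rw [Real.norm_of_nonneg (div_nonneg (hMpos v hv).le (hv'.le.trans hcd))]
    exact div_le_div_of_nonneg_left (hMpos v hv).le hv' hcd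
  · filter_upwards [ae_restrict_mem measurableSet_Icc] with v hv
    refine continuousOn_const.div (by fun_prop) fun d hd ↦ ?_
    exact (sub_pos.2 ((mul_le_abs_mul_of_mem_Icc hv).trans_lt (hc.trans_le hd))).ne'

/-- The dispersion integral is at most one for large values of its parameter. -/
theorem integral_div_sub_mul_le_one (hM : IntegrableOn M (Set.Icc (-vbar) vbar))
    (hMpos : ∀ v ∈ Set.Icc (-vbar) vbar, 0 < M v) {c : ℝ} (hc : |p| * vbar < c)
    (hcM : |p| * vbar + ∫ v in Set.Icc (-vbar) vbar, M v ≤ c) :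
    ∫ v in Set.Icc (-vbar) vbar, M v / (c - v * p) ≤ 1 := by
  have hc' : 0 < c - |p| * vbar := sub_pos.2 hc
  calc ∫ v in Set.Icc (-vbar) vbar, M v / (c - v * p)
      ≤ ∫ v in Set.Icc (-vbar) vbar, M v / (c - |p| * vbar) := by
        refine setIntegral_mono_on (integrableOn_div_sub_mul hM hc) (hM.div_const _)
          measurableSet_Icc fun v hv ↦ ?_
        exact div_le_div_of_nonneg_left (hMpos v hv).le hc'
          (sub_le_sub_left (mul_le_abs_mul_of_mem_Icc hv) c)
    _ = (∫ v in Set.Icc (-vbar) vbar, M v) / (c - |p| * vbar) := integral_div _ _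
    _ ≤ 1 := (div_le_one hc').2 (by linarith)

/-- The dispersion integral exceeds one near the left end of its range of definition. -/
theorem exists_one_le_integral_div_sub_mul (hvbar : 0 < vbar) (hM : Measurable M)
    (hMint : IntegrableOn M (Set.Icc (-vbar) vbar)) (hδ : 0 < δ)
    (hMδ : ∀ v ∈ Set.Icc (-vbar) vbar, δ ≤ M v) (hp : p ≠ 0) :
    ∃ c, |p| * vbar < c ∧ 1 ≤ ∫ v in Set.Icc (-vbar) vbar, M v / (c - v * p) := by
  obtain ⟨u, hanti, hu, hlim⟩ := exists_seq_strictAnti_tendsto (|p| * vbar)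
  have hpos : ∀ n, ∀ v ∈ Set.Icc (-vbar) vbar, 0 < u n - v * p := fun n v hv ↦
    sub_pos.2 ((mul_le_abs_mul_of_mem_Icc hv).trans_lt (hu n))
  have htop : Tendsto
      (fun n ↦ ∫⁻ v in Set.Icc (-vbar) vbar, ENNReal.ofReal (M v / (u n - v * p)))
      atTop (𝓝 ⊤) := by
    rw [← lintegral_div_abs_mul_sub_eq_top hvbar hM hδ hMδ hp]
    refine lintegral_tendsto_of_tendsto_of_monotone
      (fun n ↦ Measurable.aemeasurable (by fun_prop)) ?_ ?_
    · filter_upwards [ae_restrict_mem measurableSet_Icc] with v hv m n hmn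
      exact ENNReal.ofReal_le_ofReal (div_le_div_of_nonneg_left (hδ.le.trans (hMδ v hv))
        (hpos n v hv) (sub_le_sub_right (hanti.antitone hmn) _))
    · filter_upwards [ae_restrict_of_ae (Measure.ae_ne volume (|p| * vbar / p))] with v hv
      have hv' : |p| * vbar - v * p ≠ 0 := fun h ↦
        hv ((eq_div_iff hp).2 (sub_eq_zero.1 h).symm)
      exact ENNReal.tendsto_ofReal (tendsto_const_nhds.div (hlim.sub_const _) hv')
  obtain ⟨n, hn⟩ := (htop.eventually (lt_mem_nhds ENNReal.one_lt_top)).exists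
  refine ⟨u n, hu n, ?_⟩
  rw [← ofReal_integral_eq_lintegral_ofReal (integrableOn_div_sub_mul hMint (hu n))] at hn
  · exact (ENNReal.one_lt_ofReal.1 hn).le
  · filter_upwards [ae_restrict_mem measurableSet_Icc] with v hv
    exact div_nonneg (hδ.le.trans (hMδ v hv)) (hpos n v hv).le

theorem exists_integral_div_sub_mul_eq_one (hvbar : 0 < vbar) (hM : Measurable M)
    (hMint : IntegrableOn M (Set.Icc (-vbar) vbar)) (hδ : 0 < δ)
    (hMδ : ∀ v ∈ Set.Icc (-vbar) vbar, δ ≤ M v) (p : ℝ) :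
    ∃ c, |p| * vbar < c ∧ ∫ v in Set.Icc (-vbar) vbar, M v / (c - v * p) = 1 := by
  have hMpos : ∀ v ∈ Set.Icc (-vbar) vbar, 0 < M v := fun v hv ↦ hδ.trans_le (hMδ v hv)
  rcases eq_or_ne p 0 with rfl | hp
  · have hI := setIntegral_Icc_pos hvbar hMint hMpos
    refine ⟨∫ v in Set.Icc (-vbar) vbar, M v, by simpa using hI, ?_⟩
    simp only [mul_zero, sub_zero]
    rw [integral_div, div_self hI.ne']
  · obtain ⟨c, hc, hc1⟩ := exists_one_le_integral_div_sub_mul hvbar hM hMint hδ hMδ hp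
    set d := max c (|p| * vbar + ∫ v in Set.Icc (-vbar) vbar, M v)
    have hcd : c ≤ d := le_max_left _ _
    have hd1 := integral_div_sub_mul_le_one hMint hMpos (hc.trans_le hcd) (le_max_right _ _)
    obtain ⟨e, he, he1⟩ := intermediate_value_Icc' hcd
      ((continuousOn_integral_div_sub_mul hMint hMpos hc).mono Set.Icc_subset_Ici_self)
      ⟨hd1, hc1⟩
    exact ⟨e, hc.trans_le he.1, he1⟩

end DispersionIntegral

/-- in dimension one, if `M ≥ δ > 0` on `V = [−v̄, v̄]`, then for every
`p ≠ 0` the integral `∫_V M(v)/(μ(p) − v p) dv` is infinite; hence `Sing(M) = ∅`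
and for every `p` there is a unique `H(p) > μ(p) − 1` solving the dispersion
relation `∫_V M(v)/(1 + H(p) − v p) dv = 1`. -/
theorem stmt3
    (vbar : ℝ) (hvbar : 0 < vbar)
    (M : ℝ → ℝ) (hMmeas : Measurable M)
    (hMint : IntegrableOn M (Set.Icc (-vbar) vbar) volume)
    (δ : ℝ) (hδ : 0 < δ) (hMδ : ∀ v ∈ Set.Icc (-vbar) vbar, δ ≤ M v) :
    (∀ p : ℝ, p ≠ 0 →
      ∫⁻ v in Set.Icc (-vbar) vbar,
        ENNReal.ofReal (M v / (|p| * vbar - v * p)) = ⊤) ∧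
    ({p : ℝ | p ≠ 0 ∧
        ∫⁻ v in Set.Icc (-vbar) vbar,
          ENNReal.ofReal (M v / (|p| * vbar - v * p)) ≤ 1} = ∅) ∧
    (∀ p : ℝ, ∃! H : ℝ, |p| * vbar - 1 < H ∧
        ∫ v in Set.Icc (-vbar) vbar, M v / (1 + H - v * p) = 1) := by
  have htop := fun (p : ℝ) (hp : p ≠ 0) ↦
    lintegral_div_abs_mul_sub_eq_top hvbar hMmeas hδ hMδ hp
  have hMpos : ∀ v ∈ Set.Icc (-vbar) vbar, 0 < M v := fun v hv ↦ hδ.trans_le (hMδ v hv)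
  refine ⟨htop, ?_, fun p ↦ ?_⟩
  · refine Set.eq_empty_of_forall_notMem fun p ⟨hp, hle⟩ ↦ ?_
    rw [htop p hp] at hle
    exact absurd hle (not_le.2 ENNReal.one_lt_top)
  · obtain ⟨c, hc, hc1⟩ := exists_integral_div_sub_mul_eq_one hvbar hMmeas hMint hδ hMδ p
    refine ⟨c - 1, ⟨by linarith, by simpa using hc1⟩, fun H ⟨hH, hH1⟩ ↦ ?_⟩
    rcases lt_trichotomy (1 + H) c with h | h | h
    · have := integral_div_sub_mul_lt hvbar hMint hMpos (p := p) (by linarith) h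
      linarith
    · linarith
    · have := integral_div_sub_mul_lt hvbar hMint hMpos hc h
      linarith
end

section
/- Let V = [−1,1] and M(v) = (3/2)(1 − |v|)². Then M is a probability density on V, and for every p ∈ ℝ with p ≠ 0 one has ∫_{−1}^{1} M(v)/(|p| − v p) dv ≤ 1 if and only if |p| ≥ 3(2 ln 2 − 1). Equivalently, the singular set of M is Sing(M) = {p ∈ ℝ : |p| ≥ 3(2 ln 2 − 1)}. -/
open MeasureTheory

/-- On `[0, 1]` the quotient `(3/2)(1 - |v|)² / (1 - v)` is linear, also at `v = 1`. -/
lemma density_div_one_sub_of_nonneg {v : ℝ} (hv : 0 ≤ v) :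
    (3 / 2) * (1 - |v|) ^ 2 / (1 - v) = (3 / 2) * (1 - v) := by
  rw [abs_of_nonneg hv]
  rcases eq_or_ne (1 - v) 0 with h | h
  · simp [h]
  · field_simp

lemma density_div_one_sub_of_nonpos {v : ℝ} (hv : v ≤ 0) :
    (3 / 2) * (1 - |v|) ^ 2 / (1 - v) = (3 / 2) * (-v - 3) + 6 * (1 - v)⁻¹ := by
  rw [abs_of_nonpos hv]
  have h : 1 - v ≠ 0 := by linarith
  field_simp
  ring

lemma hasDerivAt_density_div_one_sub_primitive {v : ℝ} (hv : v ≤ 0) :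
    HasDerivAt (fun v : ℝ => -(3 / 4) * v ^ 2 - (9 / 2) * v - 6 * Real.log (1 - v))
      ((3 / 2) * (-v - 3) + 6 * (1 - v)⁻¹) v := by
  have h : 1 - v ≠ 0 := by linarith
  have hlog := ((hasDerivAt_id v).const_sub 1).log h
  refine ((((hasDerivAt_pow 2 v).const_mul (-(3 / 4) : ℝ)).sub
    ((hasDerivAt_id v).const_mul (9 / 2 : ℝ))).sub (hlog.const_mul 6)).congr_deriv ?_
  simp only [id, div_eq_mul_inv]
  push_cast
  ring

lemma intervalIntegrable_density_div_one_sub_left :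
    IntervalIntegrable (fun v : ℝ => (3 / 2) * (1 - |v|) ^ 2 / (1 - v)) volume (-1) 0 := by
  refine ContinuousOn.intervalIntegrable (ContinuousOn.div (by fun_prop) (by fun_prop) ?_)
  intro v hv
  rw [Set.uIcc_of_le (by norm_num)] at hv
  linarith [hv.2]

lemma intervalIntegrable_density_div_one_sub_right :
    IntervalIntegrable (fun v : ℝ => (3 / 2) * (1 - |v|) ^ 2 / (1 - v)) volume 0 1 := by
  have h : IntervalIntegrable (fun v : ℝ => (3 / 2) * (1 - v)) volume 0 1 :=
    Continuous.intervalIntegrable (by fun_prop) _ _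
  refine h.congr fun v hv => ?_
  rw [Set.uIoc_of_le (by norm_num)] at hv
  exact (density_div_one_sub_of_nonneg hv.1.le).symm

lemma integral_density_div_one_sub :
    ∫ v in (-1 : ℝ)..1, (3 / 2) * (1 - |v|) ^ 2 / (1 - v) = 3 * (2 * Real.log 2 - 1) := by
  have hleft : ∫ v in (-1 : ℝ)..0, (3 / 2) * (1 - |v|) ^ 2 / (1 - v)
      = 6 * Real.log 2 - 15 / 4 := by
    rw [intervalIntegral.integral_eq_sub_of_hasDerivAt
      (f := fun v : ℝ => -(3 / 4) * v ^ 2 - (9 / 2) * v - 6 * Real.log (1 - v))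
      (fun v hv => ?_) intervalIntegrable_density_div_one_sub_left]
    rotate_left
    · rw [Set.uIcc_of_le (by norm_num)] at hv
      rw [density_div_one_sub_of_nonpos hv.2]
      exact hasDerivAt_density_div_one_sub_primitive hv.2
    · norm_num
  have hright : ∫ v in (0 : ℝ)..1, (3 / 2) * (1 - |v|) ^ 2 / (1 - v) = 3 / 4 := by
    rw [intervalIntegral.integral_congr (g := fun v : ℝ => (3 / 2) * (1 - v)) fun v hv => ?_]
    rotate_left
    · rw [Set.uIcc_of_le (by norm_num)] at hv
      exact density_div_one_sub_of_nonneg hv.1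
    · rw [intervalIntegral.integral_const_mul, intervalIntegral.integral_sub (by simp) (by simp)]
      norm_num
  rw [← intervalIntegral.integral_add_adjacent_intervals
    intervalIntegrable_density_div_one_sub_left intervalIntegrable_density_div_one_sub_right,
    hleft, hright]
  ring

lemma integral_density :
    ∫ v in Set.Icc (-1 : ℝ) 1, (3 / 2) * (1 - |v|) ^ 2 = 1 := by
  have hcont : Continuous fun v : ℝ => (3 / 2) * (1 - |v|) ^ 2 := by fun_prop
  have hleft : ∫ v in (-1 : ℝ)..0, (3 / 2) * (1 - |v|) ^ 2 = 1 / 2 := by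
    rw [intervalIntegral.integral_eq_sub_of_hasDerivAt
      (f := fun v : ℝ => (1 / 2) * (1 + v) ^ 3) (fun v hv => ?_) (hcont.intervalIntegrable _ _)]
    rotate_left
    · rw [Set.uIcc_of_le (by norm_num)] at hv
      rw [abs_of_nonpos hv.2]
      refine ((((hasDerivAt_id v).const_add 1).pow 3).const_mul (1 / 2)).congr_deriv ?_
      simp only [id]
      push_cast
      ring
    · norm_num
  have hright : ∫ v in (0 : ℝ)..1, (3 / 2) * (1 - |v|) ^ 2 = 1 / 2 := by
    rw [intervalIntegral.integral_eq_sub_of_hasDerivAt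
      (f := fun v : ℝ => -(1 / 2) * (1 - v) ^ 3) (fun v hv => ?_) (hcont.intervalIntegrable _ _)]
    rotate_left
    · rw [Set.uIcc_of_le (by norm_num)] at hv
      rw [abs_of_nonneg hv.1]
      refine ((((hasDerivAt_id v).const_sub 1).pow 3).const_mul (-(1 / 2))).congr_deriv ?_
      simp only [id]
      push_cast
      ring
    · norm_num
  rw [integral_Icc_eq_integral_Ioc, ← intervalIntegral.integral_of_le (by norm_num),
    ← intervalIntegral.integral_add_adjacent_intervals
      (hcont.intervalIntegrable (-1) 0) (hcont.intervalIntegrable 0 1), hleft, hright]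
  norm_num

lemma lintegral_density_div_of_pos {p : ℝ} (hp : 0 < p) :
    ∫⁻ v in Set.Icc (-1 : ℝ) 1, ENNReal.ofReal ((3 / 2) * (1 - |v|) ^ 2 / (p - v * p))
      = ENNReal.ofReal (3 * (2 * Real.log 2 - 1) / p) := by
  have hdiv (v : ℝ) : (3 / 2) * (1 - |v|) ^ 2 / (p - v * p)
      = (3 / 2) * (1 - |v|) ^ 2 / (1 - v) / p := by
    rw [div_div, sub_mul, one_mul]
  have hint : IntegrableOn (fun v : ℝ => (3 / 2) * (1 - |v|) ^ 2 / (1 - v))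
      (Set.Icc (-1) 1) := by
    rw [integrableOn_Icc_iff_integrableOn_Ioc,
      ← intervalIntegrable_iff_integrableOn_Ioc_of_le (by norm_num)]
    exact intervalIntegrable_density_div_one_sub_left.trans
      intervalIntegrable_density_div_one_sub_right
  simp_rw [hdiv]
  rw [← ofReal_integral_eq_lintegral_ofReal (hint.div_const p), integral_div,
    integral_Icc_eq_integral_Ioc, ← intervalIntegral.integral_of_le (by norm_num),
    integral_density_div_one_sub]
  filter_upwards [ae_restrict_mem measurableSet_Icc] with v hv
  have h : 0 ≤ 1 - v := by linarith [hv.2]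
  simp only [Pi.zero_apply]
  positivity

lemma lintegral_density_div {p : ℝ} (hp : p ≠ 0) :
    ∫⁻ v in Set.Icc (-1 : ℝ) 1, ENNReal.ofReal ((3 / 2) * (1 - |v|) ^ 2 / (|p| - v * p))
      = ENNReal.ofReal (3 * (2 * Real.log 2 - 1) / |p|) := by
  rcases hp.lt_or_gt with h | h
  · rw [abs_of_neg h, ← lintegral_density_div_of_pos (neg_pos.2 h),
      ← (Measure.measurePreserving_neg (volume : Measure ℝ)).setLIntegral_comp_preimage_emb
        (Homeomorph.neg ℝ).measurableEmbedding]
    simp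
  · rw [abs_of_pos h, lintegral_density_div_of_pos h]

lemma lintegral_density_div_le_one_iff {p : ℝ} (hp : p ≠ 0) :
    ∫⁻ v in Set.Icc (-1 : ℝ) 1, ENNReal.ofReal ((3 / 2) * (1 - |v|) ^ 2 / (|p| - v * p)) ≤ 1
      ↔ 3 * (2 * Real.log 2 - 1) ≤ |p| := by
  rw [lintegral_density_div hp, ENNReal.ofReal_le_one, div_le_one (abs_pos.2 hp)]

/-- for `M(v) = (3/2)(1 − |v|)²` on `V = [−1,1]`, `M` is a probability
density and, for `p ≠ 0`, `∫_V M(v)/(|p| − v p) dv ≤ 1` iff `|p| ≥ 3(2 ln 2 − 1)`;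
equivalently, `Sing(M) = {p : |p| ≥ 3(2 ln 2 − 1)}`. -/
theorem stmt6 :
    (∀ v ∈ Set.Icc (-1 : ℝ) 1, 0 ≤ (3 / 2) * (1 - |v|) ^ 2) ∧
    (∫ v in Set.Icc (-1 : ℝ) 1, (3 / 2) * (1 - |v|) ^ 2 = 1) ∧
    (∀ p : ℝ, p ≠ 0 →
      ((∫⁻ v in Set.Icc (-1 : ℝ) 1,
          ENNReal.ofReal ((3 / 2) * (1 - |v|) ^ 2 / (|p| - v * p))) ≤ 1
        ↔ 3 * (2 * Real.log 2 - 1) ≤ |p|)) ∧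
    ({p : ℝ | p ≠ 0 ∧
        (∫⁻ v in Set.Icc (-1 : ℝ) 1,
          ENNReal.ofReal ((3 / 2) * (1 - |v|) ^ 2 / (|p| - v * p))) ≤ 1}
      = {p : ℝ | 3 * (2 * Real.log 2 - 1) ≤ |p|}) := by
  refine ⟨fun v _ => by positivity, integral_density,
    fun p hp => lintegral_density_div_le_one_iff hp, ?_⟩
  ext p
  refine ⟨fun h => (lintegral_density_div_le_one_iff h.1).1 h.2, fun h => ?_⟩
  have hp : p ≠ 0 := by
    rintro rfl
    have h0 : 3 * (2 * Real.log 2 - 1) ≤ |(0 : ℝ)| := h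
    rw [abs_zero] at h0
    linarith [Real.log_two_gt_d9]
  exact ⟨hp, (lintegral_density_div_le_one_iff hp).2 h⟩
end
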